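/- Let u₀ : ℝ³ → ℝ³ be defined by u₀(x,y,z) := (−2zx, −2zy, x² + y² − z² + 1) / √(4z²(x² + y²) + (1 + x² + y² − z²)²). Then the Dirichlet energy of u₀ over the open unit ball B₁(0) ⊂ ℝ³ equals E(u₀) = (1/2)∫_{B₁(0)} ‖Du₀(p)‖² dp = 5π − π³/4; equivalently ∫_{B₁(0)} ‖Du₀‖² dp = 10π − π³/2. -/

import Mathlib

noncomputable section

open Real MeasureTheory

/-- `ℝ³` with the Euclidean norm. -/
abbrev E3 := EuclideanSpace ℝ (Fin 3)

def toE3 (v : Fin 3 → ℝ) : E3 := (EuclideanSpace.equiv (Fin 3) ℝ).symm v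

/-- Jacobian matrix of a map `f : ℝ³ → ℝ³` at `x`. -/
def jac (f : E3 → E3) (x : E3) : Matrix (Fin 3) (Fin 3) ℝ :=
  Matrix.of fun i j => fderiv ℝ f x (EuclideanSpace.single j 1) i

/-- Squared Frobenius norm of the Jacobian of `f` at `x`. -/
def frobSq (f : E3 → E3) (x : E3) : ℝ := ∑ i, ∑ j, (jac f x i j) ^ 2

/-- The denominator `√(4z²(x²+y²) + (1+x²+y²−z²)²)`. -/
def den (p : E3) : ℝ :=
  Real.sqrt (4 * (p 2) ^ 2 * ((p 0) ^ 2 + (p 1) ^ 2) +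
    (1 + (p 0) ^ 2 + (p 1) ^ 2 - (p 2) ^ 2) ^ 2)

/-- The explicit competitor
`u₀(x,y,z) = (−2zx, −2zy, x²+y²−z²+1)/√(4z²(x²+y²)+(1+x²+y²−z²)²)`. -/
def u0 (p : E3) : E3 :=
  toE3 ![(-2 * p 2 * p 0) / den p, (-2 * p 2 * p 1) / den p,
    ((p 0) ^ 2 + (p 1) ^ 2 - (p 2) ^ 2 + 1) / den p]

/-! The map `u₀` is the normalization of the vector field `V p = (1 + ‖p‖²) e - 2 ⟪e, p⟫ p` with
`e = (0, 0, 1)`. Summing the derivative of `V / ‖V‖` over an orthonormal basis gives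
`‖Du₀‖² = 4 (‖p‖² + ⟪e, p⟫²) / ‖V‖²`. In the coordinates `s = x² + y²` and `z` one has
`‖V‖² = (s + (1 + z)²) (s + (1 - z)²)`, and on functions of `s` Lebesgue measure in the
`(x, y)`-plane is `π ds`. Partial fractions integrate out `s` over `(0, 1 - z²)` and leave, besides
a constant and polynomial multiples of `log (1 ± z)` whose integrals over `(-1, 1)` add up to `10`,
the term `-(log (1 + z) - log (1 - z)) / z = -∑ 2 z²ᵏ / (2 k + 1)`, whose integral is
`-4 ∑ 1 / (2 k + 1)² = -π² / 2`.
-/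

open scoped RealInnerProductSpace

section Normalize

variable {E F : Type*} [NormedAddCommGroup E] [NormedSpace ℝ E]
  [NormedAddCommGroup F] [InnerProductSpace ℝ F] {f : E → F} {f' : E →L[ℝ] F} {x : E}

lemma fderiv_normalize_apply (hf : HasFDerivAt f f' x) (hx : f x ≠ 0) (v : E) :
    fderiv ℝ (fun y => NormedSpace.normalize (f y)) x v =
      ‖f x‖⁻¹ • f' v - (⟪f x, f' v⟫ / ‖f x‖ ^ 3) • f x := by
  have hnorm : HasFDerivAt (fun y => ‖f y‖)
      ((1 / (2 * ‖f x‖)) • 2 • (innerSL ℝ (f x)).comp f') x := by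
    simpa using hf.norm_sq.sqrt (by simpa using hx)
  have hinv : HasFDerivAt (fun y => ‖f y‖⁻¹) _ x :=
    (hasDerivAt_inv (norm_ne_zero_iff.2 hx)).comp_hasFDerivAt x hnorm
  have hx' : ‖f x‖ ≠ 0 := norm_ne_zero_iff.2 hx
  rw [show (fun y => NormedSpace.normalize (f y)) = fun y => ‖f y‖⁻¹ • f y from rfl,
    (hinv.fun_smul hf).fderiv, sub_eq_add_neg, ← neg_smul]
  simp only [add_apply, smul_apply,
    ContinuousLinearMap.smulRight_apply, ContinuousLinearMap.comp_apply, innerSL_apply_apply,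
    smul_eq_mul, nsmul_eq_mul]
  congr 2
  field_simp
  norm_num

lemma norm_sq_fderiv_normalize_apply (hf : HasFDerivAt f f' x) (hx : f x ≠ 0) (v : E) :
    ‖fderiv ℝ (fun y => NormedSpace.normalize (f y)) x v‖ ^ 2 =
      (‖f x‖ ^ 2 * ‖f' v‖ ^ 2 - ⟪f x, f' v⟫ ^ 2) / ‖f x‖ ^ 4 := by
  have hx' : ‖f x‖ ≠ 0 := norm_ne_zero_iff.2 hx
  rw [fderiv_normalize_apply hf hx, norm_sub_sq_real]
  simp only [norm_smul, real_inner_smul_left, real_inner_smul_right, mul_pow, Real.norm_eq_abs,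
    sq_abs, real_inner_comm (f' v)]
  field_simp
  ring

end Normalize

section TangentField

variable {E : Type*} [NormedAddCommGroup E] [InnerProductSpace ℝ E]

/-- The vector field `p ↦ (1 + ‖p‖²) e - 2 ⟪e, p⟫ p`. On the unit sphere it is twice the tangential
component of `e`; for `e = (0, 0, 1)` its normalization is `u0`. -/
def tangentField (e p : E) : E := (1 + ‖p‖ ^ 2) • e - (2 * ⟪e, p⟫) • p

/-- The derivative `v ↦ 2 (⟪p, v⟫ e - ⟪e, v⟫ p - ⟪e, p⟫ v)` of `tangentField e` at `p`. -/
def tangentFieldDeriv (e p : E) : E →L[ℝ] E :=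
  (2 : ℝ) • ((innerSL ℝ p).smulRight e - (innerSL ℝ e).smulRight p -
    ⟪e, p⟫ • ContinuousLinearMap.id ℝ E)

lemma tangentFieldDeriv_apply (e p v : E) :
    tangentFieldDeriv e p v = (2 : ℝ) • (⟪p, v⟫ • e - ⟪e, v⟫ • p - ⟪e, p⟫ • v) := rfl

lemma hasFDerivAt_tangentField (e p : E) :
    HasFDerivAt (tangentField e) (tangentFieldDeriv e p) p := by
  have h1 := ((hasFDerivAt_id p).norm_sq.const_add 1).smul_const e
  have h2 := (((innerSL ℝ e).hasFDerivAt (x := p)).const_mul 2).fun_smul (hasFDerivAt_id p)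
  convert! h1.fun_sub h2 using 1
  ext v
  simp only [tangentFieldDeriv_apply, smul_apply, sub_apply, add_apply,
    ContinuousLinearMap.smulRight_apply, ContinuousLinearMap.comp_id, ContinuousLinearMap.id_apply,
    innerSL_apply_apply, smul_eq_mul, nsmul_eq_mul, Nat.cast_ofNat, id_eq]
  module

variable {e : E} (he : ‖e‖ = 1)
include he

lemma norm_tangentField_sq (p : E) :
    ‖tangentField e p‖ ^ 2 = (1 + ‖p‖ ^ 2) ^ 2 - 4 * ⟪e, p⟫ ^ 2 := by
  rw [tangentField, norm_sub_sq_real]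
  simp only [norm_smul, real_inner_smul_left, real_inner_smul_right, mul_pow, Real.norm_eq_abs,
    sq_abs, he]
  ring

lemma tangentField_ne_zero {p : E} (hp : ‖p‖ ≠ 1) : tangentField e p ≠ 0 := by
  have hcs : ⟪e, p⟫ ^ 2 ≤ ‖p‖ ^ 2 := by
    simpa [he] using sq_le_sq.2 ((abs_real_inner_le_norm e p).trans (le_abs_self _))
  have hne : 1 - ‖p‖ ^ 2 ≠ 0 := sub_ne_zero.2 fun h =>
    hp ((pow_eq_one_iff_of_nonneg (norm_nonneg p) two_ne_zero).1 h.symm)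
  have hsq : 0 < (1 - ‖p‖ ^ 2) ^ 2 := by positivity
  rw [← norm_ne_zero_iff, ← sq_pos_iff, norm_tangentField_sq he]
  linarith

lemma inner_tangentField_tangentFieldDeriv (p v : E) :
    ⟪tangentField e p, tangentFieldDeriv e p v⟫ =
      2 * ((1 + ‖p‖ ^ 2) * ⟪p, v⟫ - 2 * ⟪e, p⟫ * ⟪e, v⟫) := by
  simp only [tangentField, tangentFieldDeriv_apply, inner_sub_left, inner_sub_right,
    real_inner_smul_left, real_inner_smul_right, real_inner_self_eq_norm_sq, he,
    real_inner_comm e p]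
  ring

lemma norm_tangentFieldDeriv_apply_sq (p v : E) :
    ‖tangentFieldDeriv e p v‖ ^ 2 = 4 * (⟪p, v⟫ ^ 2 + ‖p‖ ^ 2 * ⟪e, v⟫ ^ 2 +
      ⟪e, p⟫ ^ 2 * ‖v‖ ^ 2 - 2 * ⟪e, p⟫ * (⟪p, v⟫ * ⟪e, v⟫)) := by
  simp only [← real_inner_self_eq_norm_sq, tangentFieldDeriv_apply, inner_sub_left,
    inner_sub_right, real_inner_smul_left, real_inner_smul_right, real_inner_comm e p,
    real_inner_comm e v, real_inner_comm p v]
  rw [real_inner_self_eq_norm_sq e, he]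
  ring

lemma sum_norm_sq_fderiv_normalize_tangentField {ι : Type*} [Fintype ι]
    (b : OrthonormalBasis ι ℝ E) {p : E} (hp : tangentField e p ≠ 0) :
    ∑ i, ‖fderiv ℝ (fun q => NormedSpace.normalize (tangentField e q)) p (b i)‖ ^ 2 =
      4 * (‖p‖ ^ 2 + (Fintype.card ι - 2) * ⟪e, p⟫ ^ 2) / ‖tangentField e p‖ ^ 2 := by
  have hcross : ∑ i, ⟪p, b i⟫ * ⟪e, b i⟫ = ⟪e, p⟫ := by
    simpa only [real_inner_comm] using b.sum_inner_mul_inner p e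
  have hderiv : ∑ i, ‖tangentFieldDeriv e p (b i)‖ ^ 2 =
      4 * (2 * ‖p‖ ^ 2 + (Fintype.card ι - 2) * ⟪e, p⟫ ^ 2) := by
    simp only [norm_tangentFieldDeriv_apply_sq he, ← Finset.mul_sum, Finset.sum_add_distrib,
      Finset.sum_sub_distrib, b.sum_sq_inner_left, hcross, b.norm_eq_one, he,
      Finset.sum_const, Finset.card_univ, nsmul_eq_mul]
    ring
  have hinner : ∑ i, ⟪tangentField e p, tangentFieldDeriv e p (b i)⟫ ^ 2 =
      4 * ‖p‖ ^ 2 * ‖tangentField e p‖ ^ 2 := by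
    simp only [inner_tangentField_tangentFieldDeriv he, mul_pow, sub_sq, ← Finset.mul_sum,
      Finset.sum_add_distrib, Finset.sum_sub_distrib, b.sum_sq_inner_left, he,
      norm_tangentField_sq he, mul_assoc, mul_left_comm ⟪p, b _⟫, hcross]
    ring
  have hp' : ‖tangentField e p‖ ≠ 0 := norm_ne_zero_iff.2 hp
  simp only [norm_sq_fderiv_normalize_apply (hasFDerivAt_tangentField e p) hp, ← Finset.sum_div,
    Finset.sum_sub_distrib, ← Finset.mul_sum, hderiv, hinner]
  field_simp
  ring

end TangentField

lemma frobSq_eq_sum_norm_sq (f : E3 → E3) (x : E3) :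
    frobSq f x = ∑ j, ‖fderiv ℝ f x (EuclideanSpace.single j 1)‖ ^ 2 := by
  simp only [frobSq, jac, Matrix.of_apply, EuclideanSpace.real_norm_sq_eq]
  exact Finset.sum_comm

lemma u0_eq_normalize_tangentField :
    u0 = fun p => NormedSpace.normalize (tangentField (EuclideanSpace.single 2 1) p) := by
  funext p
  have hden : den p = ‖tangentField (EuclideanSpace.single 2 1) p‖ := by
    rw [← Real.sqrt_sq (norm_nonneg _), norm_tangentField_sq (by simp), den]
    congr 1
    simp only [EuclideanSpace.real_norm_sq_eq, Fin.sum_univ_three,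
      EuclideanSpace.inner_single_left, conj_trivial, one_mul]
    ring
  ext i
  rw [NormedSpace.normalize, ← hden]
  fin_cases i <;>
    simp [u0, toE3, tangentField, EuclideanSpace.real_norm_sq_eq, Fin.sum_univ_three,
      EuclideanSpace.inner_single_left] <;>
    ring

/-- The energy density of `u0` in the cylindrical coordinates `s = x² + y²` and `z`. -/
def energyDensity (s z : ℝ) : ℝ :=
  4 * (s + 2 * z ^ 2) / ((s + (1 + z) ^ 2) * (s + (1 - z) ^ 2))

lemma frobSq_u0 {p : E3} (hp : ‖p‖ ≠ 1) :
    frobSq u0 p = energyDensity (p 0 ^ 2 + p 1 ^ 2) (p 2) := by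
  rw [frobSq_eq_sum_norm_sq, u0_eq_normalize_tangentField]
  simp only [← EuclideanSpace.basisFun_apply]
  rw [sum_norm_sq_fderiv_normalize_tangentField (by simp) _ (tangentField_ne_zero (by simp) hp),
    norm_tangentField_sq (by simp), energyDensity]
  simp only [EuclideanSpace.real_norm_sq_eq, Fin.sum_univ_three, EuclideanSpace.basisFun_apply,
    EuclideanSpace.inner_single_left, conj_trivial, one_mul, Fintype.card_fin, Nat.cast_ofNat]
  congr 1 <;> ring

section CylindricalCoordinates

open Set ENNReal

lemma lintegral_Ioi_mul_comp_sq (w : ℝ → ℝ≥0∞) :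
    ∫⁻ r in Ioi (0 : ℝ), ENNReal.ofReal (2 * r) * w (r ^ 2) = ∫⁻ s in Ioi (0 : ℝ), w s := by
  have himage : (fun r : ℝ => r ^ 2) '' Ioi 0 = Ioi 0 := by
    ext s
    refine ⟨?_, fun hs => ⟨√s, Real.sqrt_pos.2 hs, Real.sq_sqrt (le_of_lt hs)⟩⟩
    rintro ⟨r, hr, rfl⟩
    exact pow_pos (mem_Ioi.1 hr) 2
  have hmono : MonotoneOn (fun r : ℝ => r ^ 2) (Ioi 0) :=
    fun a ha b _ hab => pow_le_pow_left₀ (le_of_lt ha) hab 2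
  conv_rhs => rw [← himage]
  refine (lintegral_image_eq_lintegral_deriv_mul_of_monotoneOn measurableSet_Ioi (fun r _ => ?_)
    hmono w).symm
  simpa using (hasDerivAt_pow 2 r).hasDerivWithinAt

lemma lintegral_comp_sq_add_sq {w : ℝ → ℝ≥0∞} (hw : Measurable w) :
    ∫⁻ q : ℝ × ℝ, w (q.1 ^ 2 + q.2 ^ 2) = ENNReal.ofReal π * ∫⁻ s in Ioi (0 : ℝ), w s := by
  have hpolar (r θ : ℝ) : (r * cos θ) ^ 2 + (r * sin θ) ^ 2 = r ^ 2 := by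
    linear_combination r ^ 2 * Real.sin_sq_add_cos_sq θ
  have hmeas : Measurable fun r : ℝ => ENNReal.ofReal r * w (r ^ 2) := by fun_prop
  calc ∫⁻ q : ℝ × ℝ, w (q.1 ^ 2 + q.2 ^ 2)
      = ∫⁻ p in Ioi (0 : ℝ) ×ˢ Ioo (-π) π, ENNReal.ofReal p.1 * w (p.1 ^ 2) * 1 := by
        rw [← lintegral_comp_polarCoord_symm, polarCoord_target]
        simp only [polarCoord_symm_apply, hpolar, smul_eq_mul, mul_one]
    _ = (∫⁻ r in Ioi (0 : ℝ), ENNReal.ofReal r * w (r ^ 2)) * ENNReal.ofReal (2 * π) := by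
        rw [Measure.volume_eq_prod, ← Measure.prod_restrict,
          lintegral_prod_mul hmeas.aemeasurable aemeasurable_const, setLIntegral_one,
          Real.volume_Ioo, sub_neg_eq_add, two_mul]
    _ = ENNReal.ofReal π * ∫⁻ s in Ioi (0 : ℝ), w s := by
        simp only [← lintegral_Ioi_mul_comp_sq w, ENNReal.ofReal_mul zero_le_two, mul_assoc]
        rw [lintegral_const_mul _ hmeas]
        ring

lemma lintegral_cylindrical {w : ℝ → ℝ → ℝ≥0∞} (hw : Measurable (Function.uncurry w)) :
    ∫⁻ p : E3, w (p 0 ^ 2 + p 1 ^ 2) (p 2) =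
      ENNReal.ofReal π * ∫⁻ z, ∫⁻ s in Ioi (0 : ℝ), w s z := by
  have hsplit : MeasurePreserving (fun p : E3 => (p 2, p 0, p 1)) :=
    ((MeasurePreserving.id volume).prod (volume_preserving_finTwoArrow ℝ)).comp <|
      (volume_preserving_piFinSuccAbove (fun _ : Fin 3 => ℝ) 2).comp <|
        EuclideanSpace.volume_preserving_symm_measurableEquiv_toLp (Fin 3)
  have hmeas : Measurable fun t : ℝ × ℝ × ℝ => w (t.2.1 ^ 2 + t.2.2 ^ 2) t.1 :=
    hw.comp (g := Function.uncurry w) (f := fun t : ℝ × ℝ × ℝ => (t.2.1 ^ 2 + t.2.2 ^ 2, t.1))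
      (by fun_prop)
  rw [hsplit.lintegral_comp hmeas, Measure.volume_eq_prod, lintegral_prod _ hmeas.aemeasurable,
    ← lintegral_const_mul _ ?_]
  · exact lintegral_congr fun z =>
      lintegral_comp_sq_add_sq (w := (w · z)) (hw.comp measurable_prodMk_right)
  · exact (hw.comp measurable_swap).lintegral_prod_right'

lemma setLIntegral_ball_cylindrical {w : ℝ → ℝ → ℝ≥0∞} (hw : Measurable (Function.uncurry w))
    {R : ℝ} (hR : 0 ≤ R) :
    ∫⁻ p in {p : E3 | ‖p‖ < R}, w (p 0 ^ 2 + p 1 ^ 2) (p 2) =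
      ENNReal.ofReal π * ∫⁻ z in Ioo (-R) R, ∫⁻ s in Ioo 0 (R ^ 2 - z ^ 2), w s z := by
  let S : Set (ℝ × ℝ) := {t | t.1 + t.2 ^ 2 < R ^ 2}
  have hS : MeasurableSet S := measurableSet_lt (by fun_prop) (by fun_prop)
  have hball : {p : E3 | ‖p‖ < R} = (fun p : E3 => (p 0 ^ 2 + p 1 ^ 2, p 2)) ⁻¹' S := by
    ext p
    rw [mem_ofPred_eq, ← sq_lt_sq₀ (norm_nonneg p) hR, EuclideanSpace.real_norm_sq_eq,
      Fin.sum_univ_three]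
    rfl
  have hslice (z : ℝ) : ∫⁻ s in Ioi (0 : ℝ), S.indicator (Function.uncurry w) (s, z) =
      ∫⁻ s in Ioo 0 (R ^ 2 - z ^ 2), w s z := by
    have hsection : (fun s => (s, z)) ⁻¹' S = Iio (R ^ 2 - z ^ 2) := by
      ext s
      simp [S, lt_sub_iff_add_lt]
    rw [← Ioi_inter_Iio, inter_comm, ← setLIntegral_indicator measurableSet_Iio, ← hsection]
    rfl
  have houtside (z : ℝ) (hz : z ∉ Ioo (-R) R) : Ioo 0 (R ^ 2 - z ^ 2) = ∅ :=
    Ioo_eq_empty fun h => hz (abs_lt.1 (abs_lt_of_sq_lt_sq (sub_pos.1 h) hR))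
  calc ∫⁻ p in {p : E3 | ‖p‖ < R}, w (p 0 ^ 2 + p 1 ^ 2) (p 2)
      = ∫⁻ p : E3, S.indicator (Function.uncurry w) (p 0 ^ 2 + p 1 ^ 2, p 2) := by
        rw [← lintegral_indicator (measurableSet_lt (by fun_prop) (by fun_prop)), hball]
        rfl
    _ = ENNReal.ofReal π * ∫⁻ z, ∫⁻ s in Ioo 0 (R ^ 2 - z ^ 2), w s z := by
        rw [lintegral_cylindrical (w := fun s z => S.indicator (Function.uncurry w) (s, z))
          (hw.indicator hS)]
        simp only [hslice]
    _ = ENNReal.ofReal π * ∫⁻ z in Ioo (-R) R, ∫⁻ s in Ioo 0 (R ^ 2 - z ^ 2), w s z := by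
        rw [setLIntegral_eq_of_support_subset (Function.support_subset_iff'.2 fun z hz => ?_)]
        rw [houtside z hz, setLIntegral_empty]

lemma setLIntegral_Ioo_ofReal {f : ℝ → ℝ} {a b : ℝ} (hab : a ≤ b)
    (hf : IntervalIntegrable f volume a b) (hnonneg : ∀ x ∈ Ioo a b, 0 ≤ f x) :
    ∫⁻ x in Ioo a b, ENNReal.ofReal (f x) = ENNReal.ofReal (∫ x in a..b, f x) := by
  rw [intervalIntegral.integral_of_le hab, restrict_Ioo_eq_restrict_Ioc,
    ofReal_integral_eq_lintegral_ofReal hf.1]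
  rw [← restrict_Ioo_eq_restrict_Ioc]
  exact (ae_restrict_mem measurableSet_Ioo).mono hnonneg

end CylindricalCoordinates

section LogarithmicIntegrals

open Set

lemma hasSum_one_div_odd_sq : HasSum (fun k : ℕ => 1 / (2 * (k : ℝ) + 1) ^ 2) (π ^ 2 / 8) := by
  have heven : HasSum (fun k : ℕ => 1 / ((2 * k : ℕ) : ℝ) ^ 2) (π ^ 2 / 24) := by
    convert! hasSum_zeta_two.mul_left (1 / 4) using 1
    · funext k
      push_cast
      ring
    · ring
  have hodd : Summable fun k : ℕ => 1 / ((2 * k + 1 : ℕ) : ℝ) ^ 2 :=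
    hasSum_zeta_two.summable.comp_injective fun _ _ h => by simpa using h
  have htotal := (HasSum.even_add_odd (f := fun n : ℕ => 1 / (n : ℝ) ^ 2)
    heven hodd.hasSum).unique hasSum_zeta_two
  have hvalue : ∑' k : ℕ, 1 / ((2 * k + 1 : ℕ) : ℝ) ^ 2 = π ^ 2 / 8 := by linarith
  have hsum := hodd.hasSum
  rw [hvalue] at hsum
  simpa only [Nat.cast_add, Nat.cast_mul, Nat.cast_ofNat, Nat.cast_one] using hsum

lemma integral_neg_one_one_pow_two_mul (k : ℕ) :
    ∫ z in (-1 : ℝ)..1, z ^ (2 * k) = 2 / (2 * k + 1) := by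
  rw [integral_pow, Odd.neg_one_pow ⟨k, rfl⟩]
  norm_num

lemma integral_log_sub_log_div :
    ∫ z in (-1 : ℝ)..1, (log (1 + z) - log (1 - z)) / z = π ^ 2 / 2 := by
  let F (k : ℕ) (z : ℝ) : ℝ := 2 / (2 * k + 1) * z ^ (2 * k)
  have hF_cont (k : ℕ) : Continuous (F k) := by fun_prop
  have hF_nonneg (k : ℕ) (z : ℝ) : 0 ≤ F k z :=
    mul_nonneg (by positivity) ((even_two_mul k).pow_nonneg z)
  have hF_integral (k : ℕ) : ∫ z in Ioc (-1 : ℝ) 1, F k z = 4 * (1 / (2 * k + 1) ^ 2) := by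
    rw [← intervalIntegral.integral_of_le (by norm_num), intervalIntegral.integral_const_mul,
      integral_neg_one_one_pow_two_mul]
    field_simp
    norm_num
  have hseries : ∀ᵐ z ∂volume.restrict (Ioc (-1 : ℝ) 1),
      ∑' k, F k z = (log (1 + z) - log (1 - z)) / z := by
    rw [← restrict_Ioo_eq_restrict_Ioc]
    filter_upwards [ae_restrict_of_ae (Measure.ae_ne volume 0), ae_restrict_mem measurableSet_Ioo]
      with z hz hmem
    rw [← ((hasSum_log_sub_log_of_abs_lt_one (abs_lt.2 hmem)).div_const z).tsum_eq]
    refine tsum_congr fun k => ?_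
    simp only [F]
    field_simp
    ring
  have hsum := hasSum_integral_of_summable_integral_norm (μ := volume.restrict (Ioc (-1 : ℝ) 1))
    (fun k => ((hF_cont k).intervalIntegrable (-1) 1).1)
    (by simpa only [Real.norm_of_nonneg (hF_nonneg _ _), hF_integral]
      using hasSum_one_div_odd_sq.summable.mul_left 4)
  rw [intervalIntegral.integral_of_le (by norm_num), ← integral_congr_ae hseries]
  simp only [hF_integral] at hsum
  rw [hsum.unique (hasSum_one_div_odd_sq.mul_left 4)]
  ring

lemma intervalIntegrable_log_sub_log_div :
    IntervalIntegrable (fun z => (log (1 + z) - log (1 - z)) / z) volume (-1) 1 := by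
  -- The integral of a non-integrable function is `0`.
  by_contra h
  have hzero := integral_log_sub_log_div.symm.trans (intervalIntegral.integral_undef h)
  exact (by positivity : π ^ 2 / 2 ≠ 0) hzero

lemma integral_mul_log (a b : ℝ) :
    ∫ x in a..b, x * log x =
      (b ^ 2 / 2 * log b - b ^ 2 / 4) - (a ^ 2 / 2 * log a - a ^ 2 / 4) := by
  have hcont : Continuous fun x : ℝ => x ^ 2 / 2 * log x - x ^ 2 / 4 := by
    have : Continuous fun x : ℝ => x / 2 * (x * log x) - x ^ 2 / 4 := by fun_prop
    convert! this using 2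
    ring
  refine integral_eq_of_hasDerivAt_off_countable _ _ (countable_singleton (0 : ℝ))
    hcont.continuousOn (fun x hx => ?_) (Real.continuous_mul_log.intervalIntegrable _ _)
  have hx0 : x ≠ 0 := hx.2
  convert! ((((hasDerivAt_id' x).fun_pow 2).div_const 2).fun_mul (hasDerivAt_log hx0)).fun_sub
    (((hasDerivAt_id' x).fun_pow 2).div_const 4) using 1
  push_cast
  field_simp
  ring

lemma intervalIntegrable_sub_two_mul_log_one_add :
    IntervalIntegrable (fun z => (z - 2) * log (1 + z)) volume (-1) 1 := by
  have hlog : IntervalIntegrable (fun z => log (1 + z)) volume (-1) 1 := by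
    have hlog' : IntervalIntegrable log volume 0 2 := intervalIntegral.intervalIntegrable_log'
    convert! hlog'.comp_add_left 1 using 1 <;> norm_num
  exact hlog.continuousOn_mul (by fun_prop)

lemma integral_sub_two_mul_log_one_add :
    ∫ z in (-1 : ℝ)..1, (z - 2) * log (1 + z) = 5 - 4 * log 2 := by
  have hshift (z : ℝ) : (z - 2) * log (1 + z) = (1 + z) * log (1 + z) - 3 * log (1 + z) := by ring
  simp only [hshift]
  rw [intervalIntegral.integral_comp_add_left (fun x => x * log x - 3 * log x) 1,
    intervalIntegral.integral_sub (Real.continuous_mul_log.intervalIntegrable _ _)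
      (intervalIntegral.intervalIntegrable_log'.const_mul _),
    integral_mul_log, intervalIntegral.integral_const_mul, integral_log]
  norm_num
  ring

lemma intervalIntegrable_neg_sub_two_mul_log_one_sub :
    IntervalIntegrable (fun z => (-z - 2) * log (1 - z)) volume (-1) 1 := by
  have h := (IntervalIntegrable.iff_comp_neg (by simp)).1 intervalIntegrable_sub_two_mul_log_one_add
  simpa only [neg_neg, ← sub_eq_add_neg] using h.symm

lemma integral_neg_sub_two_mul_log_one_sub :
    ∫ z in (-1 : ℝ)..1, (-z - 2) * log (1 - z) = 5 - 4 * log 2 := by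
  have h := intervalIntegral.integral_comp_neg (a := -1) (b := 1) fun z => (z - 2) * log (1 + z)
  simpa only [neg_neg, ← sub_eq_add_neg, integral_sub_two_mul_log_one_add] using h

end LogarithmicIntegrals

section EnergyDensity

open Set

lemma energyDensity_denom_pos {s z : ℝ} (hs : 0 ≤ s) (hz : z ∈ Ioo (-1 : ℝ) 1) :
    0 < (s + (1 + z) ^ 2) * (s + (1 - z) ^ 2) := by
  have h1 : 0 < 1 + z := by linarith [hz.1]
  have h2 : 0 < 1 - z := by linarith [hz.2]
  positivity

lemma energyDensity_nonneg {s : ℝ} (hs : 0 ≤ s) (z : ℝ) : 0 ≤ energyDensity s z := by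
  unfold energyDensity
  positivity

lemma measurable_energyDensity : Measurable (Function.uncurry energyDensity) := by
  unfold energyDensity Function.uncurry
  fun_prop

lemma intervalIntegrable_energyDensity {z : ℝ} (hz : z ∈ Ioo (-1 : ℝ) 1) :
    IntervalIntegrable (energyDensity · z) volume 0 (1 - z ^ 2) := by
  refine ContinuousOn.intervalIntegrable_of_Icc (by nlinarith [hz.1, hz.2]) ?_
  exact ContinuousOn.div (by fun_prop) (by fun_prop)
    fun s hs => (energyDensity_denom_pos hs.1 hz).ne'

/-- The energy of `u0` on the horizontal slice of the unit ball at height `z`, divided by `π`, for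
`0 < |z| < 1`. At `z = 0` the last term takes the junk value `0 / 0 = 0` instead of its limit. -/
def sliceEnergy (z : ℝ) : ℝ :=
  4 * log 2 + (z - 2) * log (1 + z) + (-z - 2) * log (1 - z) - (log (1 + z) - log (1 - z)) / z

lemma integral_energyDensity {z : ℝ} (hz : z ∈ Ioo (-1 : ℝ) 1) (hz0 : z ≠ 0) :
    ∫ s in 0..1 - z ^ 2, energyDensity s z = sliceEnergy z := by
  have h1 : 0 < 1 + z := by linarith [hz.1]
  have h2 : 0 < 1 - z := by linarith [hz.2]
  have hR : 0 ≤ 1 - z ^ 2 := by nlinarith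
  have hprim (s : ℝ) (hs : s ∈ uIcc 0 (1 - z ^ 2)) : HasDerivAt
      (fun s => (1 + 2 * z - z ^ 2) / z * log (s + (1 + z) ^ 2) -
        (1 - 2 * z - z ^ 2) / z * log (s + (1 - z) ^ 2)) (energyDensity s z) s := by
    have hs0 : 0 ≤ s := (uIcc_of_le hR ▸ hs).1
    have e1 : s + (1 + z) ^ 2 ≠ 0 := by positivity
    have e2 : s + (1 - z) ^ 2 ≠ 0 := by positivity
    convert! ((((hasDerivAt_id' s).add_const _).log e1).const_mul _).fun_sub
      ((((hasDerivAt_id' s).add_const _).log e2).const_mul _) using 1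
    unfold energyDensity
    field_simp
    ring
  have hlog_add : log (1 - z ^ 2 + (1 + z) ^ 2) = log 2 + log (1 + z) := by
    rw [← Real.log_mul two_ne_zero h1.ne']
    ring_nf
  have hlog_sub : log (1 - z ^ 2 + (1 - z) ^ 2) = log 2 + log (1 - z) := by
    rw [← Real.log_mul two_ne_zero h2.ne']
    ring_nf
  rw [intervalIntegral.integral_eq_sub_of_hasDerivAt hprim (intervalIntegrable_energyDensity hz),
    hlog_add, hlog_sub, zero_add, zero_add, Real.log_pow, Real.log_pow, sliceEnergy]
  push_cast
  field_simp
  ring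

lemma ae_integral_energyDensity : ∀ᵐ z ∂volume.restrict (Ioc (-1 : ℝ) 1),
    ∫ s in 0..1 - z ^ 2, energyDensity s z = sliceEnergy z := by
  rw [← restrict_Ioo_eq_restrict_Ioc]
  filter_upwards [ae_restrict_of_ae (Measure.ae_ne volume 0), ae_restrict_mem measurableSet_Ioo]
    with z hz0 hz using integral_energyDensity hz hz0

lemma intervalIntegrable_sliceEnergy : IntervalIntegrable sliceEnergy volume (-1) 1 :=
  ((intervalIntegrable_const.add intervalIntegrable_sub_two_mul_log_one_add).add
    intervalIntegrable_neg_sub_two_mul_log_one_sub).sub intervalIntegrable_log_sub_log_div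

lemma integral_sliceEnergy : ∫ z in (-1 : ℝ)..1, sliceEnergy z = 10 - π ^ 2 / 2 := by
  have hconst : IntervalIntegrable (fun _ : ℝ => 4 * log 2) volume (-1) 1 :=
    intervalIntegrable_const
  have hadd := intervalIntegrable_sub_two_mul_log_one_add
  have hsub := intervalIntegrable_neg_sub_two_mul_log_one_sub
  unfold sliceEnergy
  rw [intervalIntegral.integral_sub ((hconst.add hadd).add hsub) intervalIntegrable_log_sub_log_div,
    intervalIntegral.integral_add (hconst.add hadd) hsub, intervalIntegral.integral_add hconst hadd,
    integral_sub_two_mul_log_one_add, integral_neg_sub_two_mul_log_one_sub,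
    integral_log_sub_log_div, intervalIntegral.integral_const, smul_eq_mul]
  ring

lemma intervalIntegrable_integral_energyDensity :
    IntervalIntegrable (fun z => ∫ s in 0..1 - z ^ 2, energyDensity s z) volume (-1) 1 := by
  refine intervalIntegrable_sliceEnergy.congr_ae ?_
  rw [uIoc_of_le (by norm_num)]
  exact ae_integral_energyDensity.mono fun _ h => h.symm

lemma integral_integral_energyDensity :
    ∫ z in (-1 : ℝ)..1, ∫ s in 0..1 - z ^ 2, energyDensity s z = 10 - π ^ 2 / 2 := by
  rw [← integral_sliceEnergy]
  simp only [intervalIntegral.integral_of_le (neg_le_self (zero_le_one' ℝ))]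
  exact integral_congr_ae ae_integral_energyDensity

lemma setLIntegral_ball_energyDensity :
    ∫⁻ p in {p : E3 | ‖p‖ < 1}, ENNReal.ofReal (energyDensity (p 0 ^ 2 + p 1 ^ 2) (p 2)) =
      ENNReal.ofReal (10 * π - π ^ 3 / 2) := by
  have hslice (z : ℝ) (hz : z ∈ Ioo (-1 : ℝ) 1) :
      ∫⁻ s in Ioo 0 (1 ^ 2 - z ^ 2), ENNReal.ofReal (energyDensity s z) =
        ENNReal.ofReal (∫ s in 0..1 - z ^ 2, energyDensity s z) := by
    rw [one_pow]
    exact setLIntegral_Ioo_ofReal (by nlinarith [hz.1, hz.2]) (intervalIntegrable_energyDensity hz)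
      fun s hs => energyDensity_nonneg hs.1.le z
  rw [setLIntegral_ball_cylindrical (w := fun s z => ENNReal.ofReal (energyDensity s z))
      measurable_energyDensity.ennreal_ofReal zero_le_one,
    setLIntegral_congr_fun measurableSet_Ioo hslice,
    setLIntegral_Ioo_ofReal (by norm_num) intervalIntegrable_integral_energyDensity,
    integral_integral_energyDensity, ← ENNReal.ofReal_mul pi_pos.le]
  · ring_nf
  · exact fun z hz => intervalIntegral.integral_nonneg (by nlinarith [hz.1, hz.2])
      fun s hs => energyDensity_nonneg hs.1 z

lemma integral_ball_energyDensity :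
    ∫ p in {p : E3 | ‖p‖ < 1}, energyDensity (p 0 ^ 2 + p 1 ^ 2) (p 2) = 10 * π - π ^ 3 / 2 := by
  have hmeas : Measurable fun p : E3 => energyDensity (p 0 ^ 2 + p 1 ^ 2) (p 2) :=
    measurable_energyDensity.comp (f := fun p : E3 => (p 0 ^ 2 + p 1 ^ 2, p 2)) (by fun_prop)
  rw [integral_eq_lintegral_of_nonneg_ae
    (.of_forall fun p => energyDensity_nonneg (by positivity) _) hmeas.aestronglyMeasurable,
    setLIntegral_ball_energyDensity, ENNReal.toReal_ofReal]
  nlinarith [mul_nonneg pi_pos.le (by nlinarith [pi_pos, pi_lt_four] : 0 ≤ 20 - π ^ 2)]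

end EnergyDensity

/-- The Dirichlet energy of `u₀` over the open unit ball equals
`5π − π³/4`; equivalently `∫ ‖Du₀‖² = 10π − π³/2`. -/
theorem u0_energy :
    (1 / 2) * ∫ p in {p : E3 | ‖p‖ < 1}, frobSq u0 p =
      5 * π - π ^ 3 / 4 ∧
    ∫ p in {p : E3 | ‖p‖ < 1}, frobSq u0 p = 10 * π - π ^ 3 / 2 := by
  have hball : MeasurableSet {p : E3 | ‖p‖ < 1} := measurableSet_lt (by fun_prop) (by fun_prop)
  have htotal : ∫ p in {p : E3 | ‖p‖ < 1}, frobSq u0 p = 10 * π - π ^ 3 / 2 := by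
    rw [← integral_ball_energyDensity]
    exact setIntegral_congr_fun hball fun p hp => frobSq_u0 hp.ne
  refine ⟨?_, htotal⟩
  rw [htotal]
  ring
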